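/- Let N ≥ 3 be an integer, let q > p > 2 be real numbers and let ε ≥ 0. Suppose u : ℝ^N → ℝ is a twice continuously differentiable function with u(x) > 0 for all x ∈ ℝ^N, u(x) → 0 as |x| → ∞, satisfying -Δu(x) + ε u(x) - u(x)^{p-1} + u(x)^{q-1} = 0 for all x ∈ ℝ^N. Then u(x) ≤ 1 for every x ∈ ℝ^N. -/

import Mathlib

open MeasureTheory Filter Set Topology
noncomputable section

/-- The Euclidean Laplacian of `u : ℝ^N → ℝ`: the sum of the second partial derivatives. -/
def lap {N : ℕ} (u : EuclideanSpace ℝ (Fin N) → ℝ) (x : EuclideanSpace ℝ (Fin N)) : ℝ :=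
  ∑ i, fderiv ℝ (fun y => fderiv ℝ u y (EuclideanSpace.single i 1)) x (EuclideanSpace.single i 1)

/-!
At a maximum point the Laplacian is nonpositive. If `u` exceeded `1` somewhere, decay at infinity
would give it a global maximum, with value `s > 1`; there `Δu ≥ εs - s^{p-1} + s^{q-1} > 0` because
`s^{q-1} > s^{p-1}`, a contradiction.
-/

open scoped Laplacian

theorem deriv_deriv_nonpos_of_isLocalMax {g : ℝ → ℝ} {a : ℝ} (h : IsLocalMax g a)
    (hg : ContinuousAt g a) : deriv (deriv g) a ≤ 0 := by
  by_contra! hlt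
  -- Otherwise `a` is also a local minimum, so `g` is locally constant and `g'' a = 0`.
  have hmin : IsLocalMin g a := isLocalMin_of_deriv_deriv_pos hlt h.deriv_eq_zero hg
  have hconst : g =ᶠ[𝓝 a] fun _ => g a := by
    filter_upwards [h, hmin] with y hle hge using le_antisymm hle hge
  have hzero : deriv (deriv g) a = 0 := by
    rw [hconst.deriv.deriv_eq]
    simp
  exact hlt.ne' hzero

theorem deriv_deriv_comp_add_smul {𝕜 E F : Type*} [NontriviallyNormedField 𝕜]
    [NormedAddCommGroup E] [NormedSpace 𝕜 E] [NormedAddCommGroup F] [NormedSpace 𝕜 F]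
    {f : E → F} {x : E} (hf : ContDiffAt 𝕜 2 f x) (v : E) :
    deriv (deriv fun t : 𝕜 => f (x + t • v)) 0 = iteratedFDeriv 𝕜 2 f x ![v, v] := by
  have hline (t : 𝕜) : HasDerivAt (fun t : 𝕜 => x + t • v) v t := by
    simpa only [id_eq, one_smul] using ((hasDerivAt_id t).smul_const v).const_add x
  have htendsto : Tendsto (fun t : 𝕜 => x + t • v) (𝓝 0) (𝓝 x) :=
    Continuous.tendsto' (by fun_prop) 0 x (by simp)
  have hdiff : ∀ᶠ y in 𝓝 x, DifferentiableAt 𝕜 f y :=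
    (hf.eventually (by simp)).mono fun _ hy => hy.differentiableAt two_ne_zero
  have hderiv : deriv (fun t : 𝕜 => f (x + t • v)) =ᶠ[𝓝 0] fun t => fderiv 𝕜 f (x + t • v) v := by
    filter_upwards [htendsto.eventually hdiff] with t ht
    exact (ht.hasFDerivAt.comp_hasDerivAt t (hline t)).deriv
  have hfderiv : HasFDerivAt (fderiv 𝕜 f) (fderiv 𝕜 (fderiv 𝕜 f) x) (x + (0 : 𝕜) • v) := by
    simpa only [zero_smul, add_zero] using
      ((hf.fderiv_right (m := 1) le_rfl).differentiableAt one_ne_zero).hasFDerivAt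
  have hcomp : HasDerivAt (fun t : 𝕜 => fderiv 𝕜 f (x + t • v)) (fderiv 𝕜 (fderiv 𝕜 f) x v) 0 :=
    hfderiv.comp_hasDerivAt (0 : 𝕜) (hline 0)
  have hderiv₂ : HasDerivAt (fun t : 𝕜 => fderiv 𝕜 f (x + t • v) v)
      (fderiv 𝕜 (fderiv 𝕜 f) x v v) 0 := by
    simpa only [map_zero, add_zero] using hcomp.clm_apply (hasDerivAt_const 0 v)
  rw [hderiv.deriv_eq, hderiv₂.deriv, iteratedFDeriv_two_apply]
  rfl

theorem iteratedFDeriv_two_apply_self_nonpos_of_isLocalMax {E : Type*} [NormedAddCommGroup E]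
    [NormedSpace ℝ E] {u : E → ℝ} {x : E} (h : IsLocalMax u x) (hu : ContDiffAt ℝ 2 u x) (v : E) :
    iteratedFDeriv ℝ 2 u x ![v, v] ≤ 0 := by
  have htendsto : Tendsto (fun t : ℝ => x + t • v) (𝓝 0) (𝓝 x) :=
    Continuous.tendsto' (by fun_prop) 0 x (by simp)
  have hmax : IsLocalMax (fun t : ℝ => u (x + t • v)) 0 := by
    simpa only [IsLocalMax, IsMaxFilter, zero_smul, add_zero] using htendsto.eventually h
  have hcont : ContinuousAt (fun t : ℝ => u (x + t • v)) 0 := by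
    simpa only [ContinuousAt, Function.comp_def, zero_smul, add_zero] using
      hu.continuousAt.tendsto.comp htendsto
  rw [← deriv_deriv_comp_add_smul hu v]
  exact deriv_deriv_nonpos_of_isLocalMax hmax hcont

theorem lap_eq_laplacian {N : ℕ} {u : EuclideanSpace ℝ (Fin N) → ℝ}
    {x : EuclideanSpace ℝ (Fin N)} (hu : DifferentiableAt ℝ (fderiv ℝ u) x) :
    lap u x = Δ u x := by
  rw [InnerProductSpace.laplacian_eq_iteratedFDeriv_orthonormalBasis u
    (EuclideanSpace.basisFun (Fin N) ℝ)]
  refine Finset.sum_congr rfl fun i _ => ?_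
  simp [iteratedFDeriv_two_apply, fderiv_clm_apply hu (differentiableAt_const _)]

theorem mul_sub_rpow_add_rpow_pos {ε s a b : ℝ} (hε : 0 ≤ ε) (hs : 1 < s) (hab : a < b) :
    0 < ε * s - s ^ a + s ^ b := by
  have hlin : 0 ≤ ε * s := mul_nonneg hε (zero_le_one.trans hs.le)
  have hpow : s ^ a < s ^ b := Real.rpow_lt_rpow_of_exponent_lt hs hab
  linarith

section MaximumPrinciple

variable {E : Type*} [NormedAddCommGroup E] [InnerProductSpace ℝ E] [FiniteDimensional ℝ E]
  {u : E → ℝ}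

theorem laplacian_nonpos_of_isLocalMax {x : E} (h : IsLocalMax u x) (hu : ContDiffAt ℝ 2 u x) :
    Δ u x ≤ 0 := by
  rw [InnerProductSpace.laplacian_eq_iteratedFDeriv_stdOrthonormalBasis]
  exact Finset.sum_nonpos fun _ _ => iteratedFDeriv_two_apply_self_nonpos_of_isLocalMax h hu _

theorem le_of_laplacian_pos_of_eventually_le {M : ℝ} (hu : ContDiff ℝ 2 u)
    (hlim : ∀ c > M, ∀ᶠ x in cocompact E, u x ≤ c) (hpos : ∀ x, M < u x → 0 < Δ u x) (x : E) :
    u x ≤ M := by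
  by_contra! hx
  obtain ⟨x₀, hx₀⟩ : ∃ x₀, ∀ y, u y ≤ u x₀ := hu.continuous.exists_forall_ge' x (hlim _ hx)
  have hnonpos : Δ u x₀ ≤ 0 :=
    laplacian_nonpos_of_isLocalMax (Eventually.of_forall hx₀) hu.contDiffAt
  exact hnonpos.not_gt (hpos x₀ (hx.trans_le (hx₀ x)))

theorem stmt_0_general {p q ε : ℝ} (hpq : p < q) (hε : 0 ≤ ε) (hu : ContDiff ℝ 2 u)
    (hlim : ∀ c > 1, ∀ᶠ x in cocompact E, u x ≤ c)
    (hpde : ∀ x, 1 < u x → -Δ u x + ε * u x - u x ^ (p - 1) + u x ^ (q - 1) ≤ 0) (x : E) :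
    u x ≤ 1 := by
  refine le_of_laplacian_pos_of_eventually_le hu hlim (fun y hy => ?_) x
  linarith [hpde y hy, mul_sub_rpow_add_rpow_pos hε hy (sub_lt_sub_right hpq 1)]

end MaximumPrinciple

/-- a positive classical solution of `-Δu + εu - u^{p-1} + u^{q-1} = 0`
decaying at infinity satisfies `u ≤ 1`. -/
theorem stmt_0 (N : ℕ) (hN : 3 ≤ N) (p q ε : ℝ) (hp : 2 < p) (hpq : p < q) (hε : 0 ≤ ε)
    (u : EuclideanSpace ℝ (Fin N) → ℝ) (hu : ContDiff ℝ 2 u)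
    (hpos : ∀ x, 0 < u x)
    (hdecay : Tendsto u (cocompact (EuclideanSpace ℝ (Fin N))) (𝓝 0))
    (hpde : ∀ x, -lap u x + ε * u x - u x ^ (p - 1) + u x ^ (q - 1) = 0) :
    ∀ x, u x ≤ 1 := by
  have hlap (x) : lap u x = Δ u x :=
    lap_eq_laplacian ((hu.fderiv_right (m := 1) le_rfl).differentiable one_ne_zero x)
  exact stmt_0_general hpq hε hu
    (fun c hc => hdecay.eventually_le_const (zero_lt_one.trans hc))
    (fun x _ => (hlap x ▸ hpde x).le)
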